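/- arXiv:1907.07528 — 5 statements merged into one kernel-verified Lean document; each statement's English description precedes it below -/
import Mathlib

section
/- The explicit η-characteristic function of the pollution control game is superadditive: for any two disjoint nonempty coalitions S₁, S₂ ⊆ Fin n, Vη(S₁ ∪ S₂) ≥ Vη(S₁) + Vη(S₂). -/
/-!
All terms of `Veta` of order at most two in `τ = T - t` are additive over disjoint coalitions.
Writing `D_{Sᶜ} = D_N - D_S` in the cubic term, the superadditivity gap is
`(1/3) * (s₁ * D_N * D₂ + s₂ * D_N * D₁ - 2 * D₁ * D₂) * τ ^ 3`. It is nonnegative because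
`sₖ ≥ 1` and `D_N ≥ Dₖ` give `sₖ * D_N ≥ Dₖ` for `k = 1, 2`.
-/

open scoped BigOperators

/-- Explicit α-characteristic function of the pollution control game. -/
noncomputable def Valpha (n : ℕ) (b d : Fin n → ℝ) (t T x : ℝ) (S : Finset (Fin n)) : ℝ :=
  -(∑ i ∈ S, d i) * (T - t) * x + (1/2) * (∑ i ∈ S, (b i)^2) * (T - t)
    - (1/2) * (∑ i, b i) * (∑ i ∈ S, d i) * (T - t)^2
    + (1/6) * (S.card : ℝ) * (∑ i ∈ S, d i)^2 * (T - t)^3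

/-- Explicit δ-characteristic function of the pollution control game. -/
noncomputable def Vdelta (n : ℕ) (b d : Fin n → ℝ) (t T x : ℝ) (S : Finset (Fin n)) : ℝ :=
  -(∑ i ∈ S, d i) * (T - t) * x + (1/2) * (∑ i ∈ S, (b i)^2) * (T - t)
    - (1/2) * (∑ i, b i) * (∑ i ∈ S, d i) * (T - t)^2
    + (1/6) * (2 * (∑ i ∈ Sᶜ, d i) * (∑ i ∈ S, d i)
        + (S.card : ℝ) * (∑ i ∈ S, d i)^2) * (T - t)^3

/-- Explicit ζ-characteristic function of the pollution control game. -/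
noncomputable def Vzeta (n : ℕ) (b d : Fin n → ℝ) (t T x : ℝ) (S : Finset (Fin n)) : ℝ :=
  -(∑ i ∈ S, d i) * (T - t) * x + (1/2) * (∑ i ∈ S, (b i)^2) * (T - t)
    - (1/2) * (∑ i, b i) * (∑ i ∈ S, d i) * (T - t)^2
    - (1/6) * (S.card : ℝ) * (∑ i, d i) * ((∑ i, d i) - 2 * (∑ i ∈ S, d i)) * (T - t)^3

/-- Explicit η-characteristic function of the pollution control game. -/
noncomputable def Veta (n : ℕ) (b d : Fin n → ℝ) (t T x : ℝ) (S : Finset (Fin n)) : ℝ :=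
  -(∑ i ∈ S, d i) * (T - t) * x + (1/2) * (∑ i ∈ S, (b i)^2) * (T - t)
    - (1/2) * (∑ i, b i) * (∑ i ∈ S, d i) * (T - t)^2
    + (1/6) * (2 * (S.card : ℝ) * (∑ i, d i) * (∑ i ∈ S, d i)
        + 2 * (∑ i ∈ Sᶜ, d i) * (∑ i ∈ S, d i)
        - (S.card : ℝ) * (∑ i, d i)^2) * (T - t)^3

/-- The explicit η-characteristic function of the pollution control game is
superadditive on disjoint nonempty coalitions. -/
theorem Veta_superadditive (n : ℕ) (hn : 1 ≤ n) (b d : Fin n → ℝ)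
    (hd : ∀ i, 0 < d i) (t T x : ℝ) (htT : t ≤ T)
    (S₁ S₂ : Finset (Fin n)) (h₁ : S₁.Nonempty) (h₂ : S₂.Nonempty)
    (hdisj : Disjoint S₁ S₂) :
    Veta n b d t T x S₁ + Veta n b d t T x S₂ ≤ Veta n b d t T x (S₁ ∪ S₂) := by
  have hcard : ((S₁ ∪ S₂).card : ℝ) = S₁.card + S₂.card := by
    exact_mod_cast Finset.card_union_of_disjoint hdisj
  have hcompl : ∀ S : Finset (Fin n), ∑ i ∈ Sᶜ, d i = ∑ i, d i - ∑ i ∈ S, d i := fun S =>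
    eq_sub_of_add_eq (Finset.sum_compl_add_sum S d)
  have hnonneg : ∀ S : Finset (Fin n), 0 ≤ ∑ i ∈ S, d i := fun S =>
    Finset.sum_nonneg fun i _ => (hd i).le
  have hle : ∀ S : Finset (Fin n), ∑ i ∈ S, d i ≤ ∑ i, d i := fun S =>
    Finset.sum_le_univ_sum_of_nonneg fun i => (hd i).le
  have hs₁ : (1 : ℝ) ≤ S₁.card := by exact_mod_cast h₁.card_pos
  have hs₂ : (1 : ℝ) ≤ S₂.card := by exact_mod_cast h₂.card_pos
  have hD₁ := hnonneg S₁
  have hD₂ := hnonneg S₂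
  have hL₁ := hle S₁
  have hL₂ := hle S₂
  have hτ : 0 ≤ (T - t) ^ 3 := pow_nonneg (sub_nonneg.2 htT) 3
  unfold Veta
  simp only [hcompl, Finset.sum_union hdisj, hcard]
  generalize (∑ i ∈ S₁, d i) = D₁ at *
  generalize (∑ i ∈ S₂, d i) = D₂ at *
  generalize (∑ i, d i) = D at *
  generalize (S₁.card : ℝ) = s₁ at *
  generalize (S₂.card : ℝ) = s₂ at *
  have key₁ : D₁ * D₂ ≤ s₁ * D * D₂ :=
    mul_le_mul_of_nonneg_right (by nlinarith) hD₂
  have key₂ : D₂ * D₁ ≤ s₂ * D * D₁ :=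
    mul_le_mul_of_nonneg_right (by nlinarith) hD₁
  have hgap : 0 ≤ (1/3) * (s₁ * D * D₂ + s₂ * D * D₁ - 2 * D₁ * D₂) * (T - t) ^ 3 :=
    mul_nonneg (by linarith) hτ
  linarith
end

section
/- The explicit η-characteristic function of the pollution control game is aligned with the bounds V^δ and V^ζ: for every nonempty coalition S ⊆ Fin n, setting k_η = 2·D_S / (2·D_S + s·D_{Sᶜ}), one has Vη(S) = k_η·Vδ(S) + (1 − k_η)·Vζ(S); in particular the alignment coefficient k_η depends only on the model parameters d and the coalition S, not on t or x. -/
open scoped BigOperators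

/-- The explicit η-characteristic function is aligned with the bounds `V^δ` and `V^ζ`,
with alignment coefficient `k_η = 2 D_S / (2 D_S + s D_{Sᶜ})` depending only on the
model parameters `d` and the coalition `S`. -/
theorem Veta_aligned (n : ℕ) (hn : 1 ≤ n) (b d : Fin n → ℝ)
    (hd : ∀ i, 0 < d i) (t T x : ℝ) (htT : t ≤ T)
    (S : Finset (Fin n)) (hS : S.Nonempty) :
    Veta n b d t T x S
      = (2 * (∑ i ∈ S, d i) / (2 * (∑ i ∈ S, d i) + (S.card : ℝ) * (∑ i ∈ Sᶜ, d i)))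
          * Vdelta n b d t T x S
        + (1 - 2 * (∑ i ∈ S, d i)
              / (2 * (∑ i ∈ S, d i) + (S.card : ℝ) * (∑ i ∈ Sᶜ, d i)))
          * Vzeta n b d t T x S := by
  -- With `D = D_S`, `C = D_{Sᶜ}`, `D_N = D + C`, the functions differ only in the `τ³` term:
  -- `Vδ - Vζ = C (2 D + s C) τ³ / 6` and `Vη - Vζ = 2 C D τ³ / 6`, whose ratio is `k_η`.
  have hD : 0 < ∑ i ∈ S, d i := Finset.sum_pos (fun i _ => hd i) hS
  have hC : 0 ≤ ∑ i ∈ Sᶜ, d i := Finset.sum_nonneg (fun i _ => (hd i).le)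
  have hN : ∑ i, d i = ∑ i ∈ S, d i + ∑ i ∈ Sᶜ, d i := (Finset.sum_add_sum_compl S d).symm
  unfold Veta Vdelta Vzeta
  rw [hN]
  generalize (∑ i ∈ S, d i) = D at *
  generalize (∑ i ∈ Sᶜ, d i) = C at *
  have hne : 2 * D + (S.card : ℝ) * C ≠ 0 := by positivity
  field_simp
  ring
end

section
/- The explicit α-characteristic function of the pollution control game is aligned with the bounds V^δ and V^ζ: for every nonempty coalition S ⊆ Fin n, setting k_α = s·D_{Sᶜ} / (2·D_S + s·D_{Sᶜ}), one has Vα(S) = k_α·Vδ(S) + (1 − k_α)·Vζ(S), and k_α = 1 − 2·D_S / (2·D_S + s·D_{Sᶜ}). -/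
open scoped BigOperators

/-- The explicit α-characteristic function is aligned with the bounds `V^δ` and `V^ζ`,
with alignment coefficient `k_α = s D_{Sᶜ} / (2 D_S + s D_{Sᶜ}) = 1 − k_η`. -/
theorem Valpha_aligned (n : ℕ) (hn : 1 ≤ n) (b d : Fin n → ℝ)
    (hd : ∀ i, 0 < d i) (t T x : ℝ) (htT : t ≤ T)
    (S : Finset (Fin n)) (hS : S.Nonempty) :
    Valpha n b d t T x S
      = ((S.card : ℝ) * (∑ i ∈ Sᶜ, d i)
            / (2 * (∑ i ∈ S, d i) + (S.card : ℝ) * (∑ i ∈ Sᶜ, d i)))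
          * Vdelta n b d t T x S
        + (1 - (S.card : ℝ) * (∑ i ∈ Sᶜ, d i)
              / (2 * (∑ i ∈ S, d i) + (S.card : ℝ) * (∑ i ∈ Sᶜ, d i)))
          * Vzeta n b d t T x S
    ∧ (S.card : ℝ) * (∑ i ∈ Sᶜ, d i)
          / (2 * (∑ i ∈ S, d i) + (S.card : ℝ) * (∑ i ∈ Sᶜ, d i))
        = 1 - 2 * (∑ i ∈ S, d i)
            / (2 * (∑ i ∈ S, d i) + (S.card : ℝ) * (∑ i ∈ Sᶜ, d i)) := by
  have hD : 0 < ∑ i ∈ S, d i := Finset.sum_pos (fun i _ => hd i) hS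
  have hC : 0 ≤ ∑ i ∈ Sᶜ, d i := Finset.sum_nonneg (fun i _ => (hd i).le)
  have hN : ∑ i, d i = ∑ i ∈ S, d i + ∑ i ∈ Sᶜ, d i := (Finset.sum_add_sum_compl S d).symm
  have hden : 2 * (∑ i ∈ S, d i) + (S.card : ℝ) * (∑ i ∈ Sᶜ, d i) ≠ 0 := by positivity
  unfold Valpha Vdelta Vzeta
  rw [hN]
  -- With `D_N = D_S + D_{Sᶜ}`, `D_N (D_N - 2 D_S) = D_{Sᶜ}² - D_S²`; relative to `Vα`, the cubic
  -- coefficients of `Vδ` and `Vζ` are off by `2 D_{Sᶜ} D_S / 6` and `-s D_{Sᶜ}² / 6`, and the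
  -- weights `s D_{Sᶜ}` and `2 D_S` make these cancel.
  constructor
  · field_simp
    ring
  · field_simp
    ring
end

section
/- For the pollution control game, the Shapley values computed from the explicit α- and δ-characteristic functions coincide: for every player i : Fin n, Sh_i(Vα) = Sh_i(Vδ). -/
/-!
The two characteristic functions differ by `W S = (1/3) * D_S * D_{Sᶜ} * (T - t)^3`, which is
invariant under complementation: `W Sᶜ = W S`. The involution `S ↦ (S \ {i})ᶜ` on the coalitions
containing `i` preserves the Shapley weights (it exchanges `n - |S|` and `|S| - 1`) and, for such
a game, negates the marginal contribution `W S - W (S \ {i})`. Hence every complement-invariant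
game has Shapley value zero (`shapley_eq_zero_of_compl`), and linearity gives the claim.
-/

open scoped BigOperators

/-- The Shapley value of player `i` for a characteristic function `V` on coalitions of
`Fin n`. -/
noncomputable def Shapley (n : ℕ) (V : Finset (Fin n) → ℝ) (i : Fin n) : ℝ :=
  ∑ S ∈ Finset.univ.filter (fun S : Finset (Fin n) => i ∈ S),
    ((Nat.factorial (n - S.card) * Nat.factorial (S.card - 1) : ℝ) / Nat.factorial n)
      * (V S - V (S \ {i}))

/-- A game in which every coalition has the same worth as its complement has zero Shapley
value: the sum equals its own negative under the reindexing `S ↦ (S \ {i})ᶜ`. -/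
lemma shapley_eq_zero_of_compl (n : ℕ) (W : Finset (Fin n) → ℝ) (hW : ∀ S, W Sᶜ = W S)
    (i : Fin n) : Shapley n W i = 0 := by
  have h : Shapley n W i = -Shapley n W i := by
    unfold Shapley
    rw [← Finset.sum_neg_distrib]
    refine Finset.sum_bij' (fun S _ => (S \ {i})ᶜ) (fun S _ => (S \ {i})ᶜ) ?_ ?_ ?_ ?_ ?_
    · intro S _
      simp
    · intro S _
      simp
    · intro S hS
      have hi : i ∈ S := by simpa using hS
      ext j
      by_cases hj : j = i <;> simp [hj, hi]
    · intro S hS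
      have hi : i ∈ S := by simpa using hS
      ext j
      by_cases hj : j = i <;> simp [hj, hi]
    · intro S hS
      have hi : i ∈ S := by simpa using hS
      have hpos : 1 ≤ S.card := Finset.card_pos.mpr ⟨i, hi⟩
      have hle : S.card ≤ n := by simpa using Finset.card_le_univ S
      have hcard : ((S \ {i})ᶜ).card = n - (S.card - 1) := by
        rw [Finset.card_compl, Finset.sdiff_singleton_eq_erase, Finset.card_erase_of_mem hi,
          Fintype.card_fin]
      have hsd : (S \ {i})ᶜ \ {i} = Sᶜ := by
        ext j
        by_cases hj : j = i <;> simp [hj, hi]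
      have h1 : n - (n - (S.card - 1)) = S.card - 1 := by omega
      have h2 : n - (S.card - 1) - 1 = n - S.card := by omega
      rw [hcard, hsd, hW, hW, h1, h2]
      ring
  linarith

lemma shapley_sub (n : ℕ) (V W : Finset (Fin n) → ℝ) (i : Fin n) :
    Shapley n (fun S => V S - W S) i = Shapley n V i - Shapley n W i := by
  unfold Shapley
  rw [← Finset.sum_sub_distrib]
  refine Finset.sum_congr rfl fun S _ => ?_
  ring

/-- The Shapley values computed from the explicit α- and δ-characteristic functions of
the pollution control game coincide. -/
theorem shapley_alpha_eq_delta (n : ℕ) (hn : 1 ≤ n) (b d : Fin n → ℝ)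
    (t T x : ℝ) (htT : t ≤ T) (i : Fin n) :
    Shapley n (Valpha n b d t T x) i = Shapley n (Vdelta n b d t T x) i := by
  have h := shapley_eq_zero_of_compl n
    (fun S => Valpha n b d t T x S - Vdelta n b d t T x S) (fun S => by
      simp only [Valpha, Vdelta, compl_compl]
      ring) i
  rw [shapley_sub] at h
  linarith
end

section
/- For the pollution control game, the Shapley values computed from the explicit ζ- and η-characteristic functions coincide and are given explicitly: for every player i : Fin n, Sh_i(Vζ) = Sh_i(Vη) = −d i·τ·x + (1/2)·(b i)²·τ − (1/2)·B_N·d i·τ² + (1/6)·n·D_N·d i·τ³. -/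
/-!
The reflection `S ↦ {i} ∪ Sᶜ` is an involution of the coalitions containing `i`; it exchanges the
sizes `s` and `n + 1 - s` and therefore preserves the Shapley weight. Hence, the weights having
total mass one (`shapley_weights_sum`), the Shapley value of `i` equals `c` as soon as the marginal
contributions of `i` to `S` and to its reflection always add up to `2 * c`
(`shapley_eq_of_reflection`). For both characteristic functions the marginal contribution is
affine in `|S|` and in `∑ j ∈ S, d j`. The sum of these quantities over `S` and its reflection is
`n + 1` and `D_N + d i` respectively, so the criterion applies, with the same `c` in both cases.
-/

open scoped BigOperators

/-- There are `(n - 1).choose (s - 1)` coalitions of size `s` containing `i`, so each size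
contributes `1 / n`. -/
lemma shapley_weights_sum (n : ℕ) (i : Fin n) :
    ∑ S ∈ Finset.univ.filter (fun S : Finset (Fin n) => i ∈ S),
      ((Nat.factorial (n - S.card) * Nat.factorial (S.card - 1) : ℝ) / Nat.factorial n) = 1 := by
  obtain ⟨m, rfl⟩ : ∃ m, n = m + 1 := ⟨n - 1, by have := i.pos; omega⟩
  have key : ∑ S ∈ Finset.univ.filter (fun S : Finset (Fin (m + 1)) => i ∈ S),
      ((Nat.factorial (m + 1 - S.card) * Nat.factorial (S.card - 1) : ℝ) / Nat.factorial (m + 1))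
      = ∑ A ∈ (Finset.univ.erase i).powerset,
        ((Nat.factorial (m - A.card) * Nat.factorial A.card : ℝ) / Nat.factorial (m + 1)) := by
    refine Finset.sum_bij' (fun S _ => S.erase i) (fun A _ => insert i A) ?_ ?_ ?_ ?_ ?_
    · intro S _
      exact Finset.mem_powerset.2 (Finset.erase_subset_erase _ (Finset.subset_univ _))
    · intro A _
      simp
    · intro S hS
      exact Finset.insert_erase (by simpa using hS)
    · intro A hA
      refine Finset.erase_insert fun h => ?_
      simpa using Finset.mem_powerset.1 hA h
    · intro S hS
      have hS : i ∈ S := by simpa using hS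
      have hpos : 0 < S.card := Finset.card_pos.2 ⟨i, hS⟩
      rw [Finset.card_erase_of_mem hS, show m + 1 - S.card = m - (S.card - 1) by omega]
  rw [key, Finset.sum_powerset_apply_card
    (fun k => ((Nat.factorial (m - k) * Nat.factorial k : ℝ) / Nat.factorial (m + 1)))]
  have hcard : (Finset.univ.erase i).card = m := by simp
  rw [hcard, Finset.sum_congr rfl (g := fun _ => (1 : ℝ) / (m + 1))]
  · simp
    field_simp
  · intro k hk
    have hk : k ≤ m := by simpa [Nat.lt_succ_iff] using hk
    have h : (m.choose k : ℝ) * k.factorial * (m - k).factorial = m.factorial := by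
      exact_mod_cast Nat.choose_mul_factorial_mul_factorial hk
    have hm : (m.factorial : ℝ) ≠ 0 := by positivity
    rw [nsmul_eq_mul, Nat.factorial_succ]
    push_cast
    rw [show (m.choose k : ℝ) * ((m - k).factorial * k.factorial / ((m + 1) * m.factorial))
      = (m.choose k * k.factorial * (m - k).factorial) / ((m + 1) * m.factorial) by ring, h]
    field_simp

lemma card_insert_compl {n : ℕ} {i : Fin n} {S : Finset (Fin n)} (hS : i ∈ S) :
    (insert i Sᶜ).card = n - S.card + 1 := by
  rw [Finset.card_insert_of_notMem (by simpa using hS), Finset.card_compl, Fintype.card_fin]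

/-- If the marginal contributions of `i` to a coalition and to its reflection `insert i Sᶜ` always
have mean `c`, then the Shapley value of `i` is `c`. -/
lemma shapley_eq_of_reflection (n : ℕ) (V : Finset (Fin n) → ℝ) (i : Fin n) (c : ℝ)
    (h : ∀ S : Finset (Fin n), i ∈ S →
      (V S - V (S \ {i})) + (V (insert i Sᶜ) - V (insert i Sᶜ \ {i})) = 2 * c) :
    Shapley n V i = c := by
  have hrefl : Shapley n V i = ∑ S ∈ Finset.univ.filter (fun S : Finset (Fin n) => i ∈ S),
      ((Nat.factorial (n - S.card) * Nat.factorial (S.card - 1) : ℝ) / Nat.factorial n)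
        * (V (insert i Sᶜ) - V (insert i Sᶜ \ {i})) := by
    have hinv : ∀ S : Finset (Fin n), i ∈ S → insert i (insert i Sᶜ)ᶜ = S := by
      intro S hS
      ext j
      by_cases hj : j = i <;> simp [hj, hS]
    refine Finset.sum_bij' (fun S _ => insert i Sᶜ) (fun S _ => insert i Sᶜ) ?_ ?_ ?_ ?_ ?_
    · intro S _
      simp
    · intro S _
      simp
    · intro S hS
      exact hinv S (by simpa using hS)
    · intro S hS
      exact hinv S (by simpa using hS)
    · intro S hS
      have hS : i ∈ S := by simpa using hS
      have hpos : 0 < S.card := Finset.card_pos.2 ⟨i, hS⟩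
      have hle : S.card ≤ n := by simpa using Finset.card_le_univ S
      rw [hinv S hS, card_insert_compl hS,
        show n - (n - S.card + 1) = S.card - 1 by omega, Nat.add_sub_cancel,
        mul_comm (Nat.factorial (S.card - 1) : ℝ)]
  have hsum : Shapley n V i + Shapley n V i = 2 * c := by
    nth_rewrite 2 [hrefl]
    rw [Shapley, ← Finset.sum_add_distrib,
      Finset.sum_congr rfl (g := fun S : Finset (Fin n) =>
        ((Nat.factorial (n - S.card) * Nat.factorial (S.card - 1) : ℝ) / Nat.factorial n)
          * (2 * c)),
      ← Finset.sum_mul, shapley_weights_sum, one_mul]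
    intro S hS
    rw [← mul_add, h S (by simpa using hS)]
  linarith

lemma sum_sdiff_self {n : ℕ} (f : Fin n → ℝ) {i : Fin n} {S : Finset (Fin n)} (hS : i ∈ S) :
    ∑ j ∈ S \ {i}, f j = ∑ j ∈ S, f j - f i := by
  rw [Finset.sdiff_singleton_eq_erase, Finset.sum_erase_eq_sub hS]

lemma card_sdiff_self {n : ℕ} {i : Fin n} {S : Finset (Fin n)} (hS : i ∈ S) :
    ((S \ {i}).card : ℝ) = S.card - 1 := by
  rw [Finset.sdiff_singleton_eq_erase, Finset.cast_card_erase_of_mem hS]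

lemma sum_compl_eq {n : ℕ} (f : Fin n → ℝ) (S : Finset (Fin n)) :
    ∑ j ∈ Sᶜ, f j = ∑ j, f j - ∑ j ∈ S, f j :=
  eq_sub_of_add_eq (Finset.sum_compl_add_sum S f)

lemma sum_insert_compl {n : ℕ} (f : Fin n → ℝ) {i : Fin n} {S : Finset (Fin n)} (hS : i ∈ S) :
    ∑ j ∈ insert i Sᶜ, f j = f i + (∑ j, f j - ∑ j ∈ S, f j) := by
  rw [Finset.sum_insert (by simpa using hS), sum_compl_eq]

lemma cast_card_insert_compl {n : ℕ} {i : Fin n} {S : Finset (Fin n)} (hS : i ∈ S) :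
    ((insert i Sᶜ).card : ℝ) = n - S.card + 1 := by
  have hle : S.card ≤ n := by simpa using Finset.card_le_univ S
  rw [card_insert_compl hS, Nat.cast_add, Nat.cast_sub hle, Nat.cast_one]

/-- The Shapley values computed from the explicit ζ- and η-characteristic functions of
the pollution control game coincide and are given by an explicit formula. -/
theorem shapley_zeta_eq_eta (n : ℕ) (hn : 1 ≤ n) (b d : Fin n → ℝ)
    (t T x : ℝ) (htT : t ≤ T) (i : Fin n) :
    Shapley n (Vzeta n b d t T x) i = Shapley n (Veta n b d t T x) i
    ∧ Shapley n (Veta n b d t T x) i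
        = -d i * (T - t) * x + (1/2) * (b i)^2 * (T - t)
            - (1/2) * (∑ j, b j) * d i * (T - t)^2
            + (1/6) * (n : ℝ) * (∑ j, d j) * d i * (T - t)^3 := by
  have hη : Shapley n (Veta n b d t T x) i
        = -d i * (T - t) * x + (1/2) * (b i)^2 * (T - t)
            - (1/2) * (∑ j, b j) * d i * (T - t)^2
            + (1/6) * (n : ℝ) * (∑ j, d j) * d i * (T - t)^3 := by
    refine shapley_eq_of_reflection n _ i _ fun S hS => ?_
    have hi : i ∈ insert i Sᶜ := Finset.mem_insert_self _ _
    simp only [Veta, sum_compl_eq d, sum_sdiff_self _ hS, sum_sdiff_self _ hi, card_sdiff_self hS,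
      card_sdiff_self hi, sum_insert_compl _ hS, cast_card_insert_compl hS]
    ring
  refine ⟨?_, hη⟩
  rw [hη]
  refine shapley_eq_of_reflection n _ i _ fun S hS => ?_
  have hi : i ∈ insert i Sᶜ := Finset.mem_insert_self _ _
  simp only [Vzeta, sum_sdiff_self _ hS, sum_sdiff_self _ hi, card_sdiff_self hS,
    card_sdiff_self hi, sum_insert_compl _ hS, cast_card_insert_compl hS]
  ring
end
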